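/- arXiv:2402.04687 — 2 statements merged into one kernel-verified Lean document; each statement's English description precedes it below -/
import Mathlib

section
/- Let C be a closed convex cone in a finite-dimensional real normed vector space V and let α be a continuous antinorm associated with C that is linear on a subcone adjacent to the boundary, i.e., there exists p ∈ rb(C^∨) such that p is not identically zero on C and ri(p^∨) ⊆ ri C. Then there exists p ∈ rb(C^∨) such that p is not identically zero on C, p^∨₁ ≠ ∅, and α^∨(p) > 0. -/
open Set

variable {V : Type*} [NormedAddCommGroup V] [NormedSpace ℝ V]

/-- `C` is a closed convex cone (containing the origin). -/
def IsClosedConvexCone (C : Set V) : Prop :=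
  (0 : V) ∈ C ∧ IsClosed C ∧ Convex ℝ C ∧ ∀ c : ℝ, 0 < c → ∀ x ∈ C, c • x ∈ C

/-- A cone is salient if it contains no nonzero linear subspace,
equivalently it contains no pair `x, -x` with `x ≠ 0`. -/
def IsSalientCone (C : Set V) : Prop := ∀ x ∈ C, x ≠ 0 → -x ∉ C

/-- The relative boundary of a set: the set minus its relative (intrinsic) interior. -/
def relBoundary (C : Set V) : Set V := C \ intrinsicInterior ℝ C

/-- `a` is an antinorm associated with the cone `C` : it takes values in `ℝ ∪ {-∞}`,
is positive on the relative interior of `C`, vanishes on the relative boundary of `C`,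
is `-∞` off `C`, is positively homogeneous and superadditive (concave). -/
def IsAntinorm (C : Set V) (a : V → EReal) : Prop :=
  (∀ v, a v ≠ ⊤) ∧
  (∀ v ∈ intrinsicInterior ℝ C, 0 < a v) ∧
  (∀ v ∈ relBoundary C, a v = 0) ∧
  (∀ v, v ∉ C → a v = ⊥) ∧
  (∀ c : ℝ, 0 < c → ∀ v, a (c • v) = (c : EReal) * a v) ∧
  (∀ v w, a v + a w ≤ a (v + w))

/-- The negative dual cone `C^∨ = {p : ⟨p,u⟩ ≤ 0 ∀ u ∈ C}`. -/
def negDual (C : Set V) : Set (V →L[ℝ] ℝ) := {p | ∀ u ∈ C, p u ≤ 0}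

/-- The antisphere of radius `r`. -/
def antisphere (a : V → EReal) (r : ℝ) : Set V := {v | a v = (r : EReal)}

/-- The dual function `α^∨(p) = -sup_{v ∈ S₁} ⟨p, v⟩`. -/
noncomputable def dualFn (a : V → EReal) (p : V →L[ℝ] ℝ) : EReal :=
  - sSup ((fun v => ((p v : ℝ) : EReal)) '' antisphere a 1)

/-- `p^∨_r` : the set of maximizers of `v ↦ ⟨p, v⟩` over the antisphere `S_r`. -/
def maxSet (a : V → EReal) (p : V →L[ℝ] ℝ) (r : ℝ) : Set V :=
  {v ∈ antisphere a r | ∀ w ∈ antisphere a r, p w ≤ p v}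

/-- `p^∨ = ⋃_{r ≥ 0} p^∨_r`. -/
def pDual (a : V → EReal) (p : V →L[ℝ] ℝ) : Set V := ⋃ r ∈ Ici (0 : ℝ), maxSet a p r

/-- A functional that is nonpositive on `C` and negative somewhere on `C` is negative on the
relative interior of `C`. -/
theorem aux_neg {V : Type*} [NormedAddCommGroup V] [NormedSpace ℝ V]
    (C : Set V) (p : V →L[ℝ] ℝ) (hneg : ∀ w ∈ C, p w ≤ 0) (u : V) (hu : u ∈ C) (hpu : p u < 0)
    (v : V) (hv : v ∈ intrinsicInterior ℝ C) : p v < 0 := by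
  rw [mem_intrinsicInterior] at hv
  obtain ⟨y, hy, rfl⟩ := hv
  have hline : ∀ t : ℝ, (y : V) + t • (u - y) ∈ affineSpan ℝ C := by
    intro t
    have := AffineMap.lineMap_mem t y.2 (subset_affineSpan ℝ C hu)
    rwa [AffineMap.lineMap_apply, vsub_eq_sub, vadd_eq_add, add_comm] at this
  let g : ℝ → affineSpan ℝ C := fun t => ⟨(y : V) + t • (u - y), hline t⟩
  have hg : Continuous g := Continuous.subtype_mk (by fun_prop) _
  have hg0 : g 0 = y := by
    apply Subtype.ext
    simp [g]
  have hnhds : g ⁻¹' interior ((↑) ⁻¹' C) ∈ nhds (0 : ℝ) :=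
    (isOpen_interior.preimage hg).mem_nhds (by
      rw [mem_preimage, hg0]
      exact hy)
  obtain ⟨ε, hε, hball⟩ := Metric.mem_nhds_iff.1 hnhds
  have h1 : (-(ε / 2)) ∈ Metric.ball (0 : ℝ) ε := by
    rw [Metric.mem_ball, dist_zero_right, norm_neg, Real.norm_eq_abs, abs_of_pos (by linarith)]
    linarith
  have h2 : (y : V) + (-(ε / 2)) • (u - y) ∈ C := by
    have h4 : g (-(ε / 2)) ∈ ((↑) ⁻¹' C : Set (affineSpan ℝ C)) := interior_subset (hball h1)
    exact h4
  have h3 := hneg _ h2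
  simp only [map_add, map_smul, map_sub, smul_eq_mul] at h3
  have hyC : (y : V) ∈ C := by
    have : y ∈ ((↑) ⁻¹' C : Set (affineSpan ℝ C)) := interior_subset hy
    exact this
  refine lt_of_le_of_ne (hneg _ hyC) fun h => ?_
  rw [h] at h3
  nlinarith

/-- If a continuous antinorm `a` associated with a closed convex cone `C` is
linear on a subcone adjacent to the boundary (there is `p ∈ rb(C^∨)`, not identically zero
on `C`, with `ri(p^∨) ⊆ ri C`), then there is `p ∈ rb(C^∨)`, not identically zero on `C`,
with `p^∨₁ ≠ ∅` and `a^∨(p) > 0`. -/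
theorem statement8 {V : Type*} [NormedAddCommGroup V] [NormedSpace ℝ V] [FiniteDimensional ℝ V]
    (C : Set V) (hC : IsClosedConvexCone C)
    (a : V → EReal) (ha : IsAntinorm C a) (hcont : ContinuousOn a C)
    (hlin : ∃ p ∈ relBoundary (negDual C), (∃ u ∈ C, p u ≠ 0) ∧
      intrinsicInterior ℝ (pDual a p) ⊆ intrinsicInterior ℝ C) :
    ∃ p ∈ relBoundary (negDual C), (∃ u ∈ C, p u ≠ 0) ∧
      (maxSet a p 1).Nonempty ∧ 0 < dualFn a p := by
  obtain ⟨p, hp, ⟨u, hu, hpu⟩, hsub⟩ := hlin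
  obtain ⟨h0, -, hconv, -⟩ := hC
  obtain ⟨htop, hpos, hbd, hbot, hhom, -⟩ := ha
  have hneg : ∀ w ∈ C, p w ≤ 0 := hp.1
  have hpu' : p u < 0 := lt_of_le_of_ne (hneg u hu) hpu
  have hmem : ∀ v (r : ℝ), a v = (r : EReal) → v ∈ C := by
    intro v r hv
    by_contra h
    rw [hbot v h] at hv
    exact EReal.bot_ne_coe r hv
  have a0 : a 0 = 0 := by
    by_cases hi : (0 : V) ∈ intrinsicInterior ℝ C
    · have h1 := hpos 0 hi
      have h2 := hhom 2 (by norm_num) 0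
      rw [smul_zero] at h2
      have h3 : a 0 ≠ ⊥ := (lt_of_le_of_lt bot_le h1).ne'
      lift a 0 to ℝ using ⟨htop 0, h3⟩ with x hx
      norm_cast at h1 h2 ⊢
      linarith
    · exact hbd 0 ⟨h0, hi⟩
  have hF : ∀ v ∈ intrinsicInterior ℝ C, p v < 0 :=
    fun v hv => aux_neg C p hneg u hu hpu' v hv
  have hne : (maxSet a p 1).Nonempty := by
    by_contra hemp
    have hEq : pDual a p = C ∩ {v | p v = 0} := by
      ext v
      simp only [pDual, mem_iUnion, mem_Ici, exists_prop, mem_inter_iff, mem_ofPred_eq]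
      constructor
      · rintro ⟨r, hr, hv, hmax⟩
        rcases hr.eq_or_lt with rfl | hr
        · refine ⟨hmem v 0 hv, le_antisymm (hneg v (hmem v 0 hv)) ?_⟩
          have := hmax 0 (by simp [antisphere, a0])
          simpa using this
        · exfalso
          apply hemp
          refine ⟨r⁻¹ • v, ?_, ?_⟩
          · simp only [antisphere, mem_ofPred_eq] at hv ⊢
            rw [hhom _ (inv_pos.2 hr), hv, ← EReal.coe_mul, inv_mul_cancel₀ hr.ne']
          · intro w hw
            simp only [antisphere, mem_ofPred_eq] at hw
            have h1 := hmax (r • w) (by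
              simp only [antisphere, mem_ofPred_eq]
              rw [hhom _ hr, hw, ← EReal.coe_mul, mul_one])
            rw [map_smul, smul_eq_mul] at h1 ⊢
            rw [inv_mul_eq_div, le_div_iff₀ hr]
            linarith
      · rintro ⟨hv, hpv⟩
        refine ⟨0, le_rfl, ?_, ?_⟩
        · simp only [antisphere, mem_ofPred_eq]
          exact hbd v ⟨hv, fun h => (hF v h).ne hpv⟩
        · intro w hw
          rw [hpv]
          exact hneg w (hmem w 0 hw)
    have hcv : Convex ℝ (pDual a p) := by
      rw [hEq]
      refine hconv.inter ?_
      intro x hx y hy s t _ _ _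
      simp only [mem_ofPred_eq] at hx hy ⊢
      simp [hx, hy]
    have hn : (pDual a p).Nonempty := by
      rw [hEq]
      exact ⟨0, h0, by simp⟩
    obtain ⟨x, hx⟩ := hn.intrinsicInterior hcv
    have h1 := hF x (hsub hx)
    have h2 := intrinsicInterior_subset hx
    rw [hEq] at h2
    exact h1.ne h2.2
  refine ⟨p, hp, ⟨u, hu, hpu⟩, hne, ?_⟩
  obtain ⟨v, hv, hmax⟩ := hne
  have hvi : v ∈ intrinsicInterior ℝ C := by
    by_contra h
    have h1 := hbd v ⟨hmem v 1 hv, h⟩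
    rw [show a v = ((1 : ℝ) : EReal) from hv] at h1
    norm_num at h1
  have hle : sSup ((fun v => ((p v : ℝ) : EReal)) '' antisphere a 1) ≤ ((p v : ℝ) : EReal) := by
    apply sSup_le
    rintro _ ⟨w, hw, rfl⟩
    exact EReal.coe_le_coe_iff.2 (hmax w hw)
  have hlt : sSup ((fun v => ((p v : ℝ) : EReal)) '' antisphere a 1) < 0 :=
    lt_of_le_of_lt hle (by exact_mod_cast hF v hvi)
  unfold dualFn
  rw [EReal.lt_neg_comm, neg_zero]
  exact hlt
end

section
/- Let C be a salient closed convex cone in a finite-dimensional real normed vector space V and let α be a continuous antinorm associated with C whose dual function α^∨ is an antinorm associated with C^∨. Let p ∈ ri(C^∨). Then the function u ↦ ⟨p, u⟩ + α(u) attains a maximum on C \ {0} if and only if α^∨(p) = 1; in that case the maximal value is 0 and the set of maximizers equals p^∨ \ {0}, which is contained in ri C. -/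
open Set

variable {V : Type*} [NormedAddCommGroup V] [NormedSpace ℝ V]

lemma aux_neg_s9 [FiniteDimensional ℝ V]
    (C : Set V) (hC : IsClosedConvexCone C) (hsal : IsSalientCone C)
    (p : V →L[ℝ] ℝ) (hp : p ∈ intrinsicInterior ℝ (negDual C)) (u : V) (hu : u ∈ C)
    (hu0 : u ≠ 0) : p u < 0 := by
  obtain ⟨h0, hcl, hcv, hsc⟩ := hC
  have hpC : p ∈ negDual C := intrinsicInterior_subset hp
  refine lt_of_le_of_ne (hpC u hu) fun hpu => ?_
  obtain ⟨f, c, hf1, hf2⟩ := geometric_hahn_banach_closed_point hcv hcl (hsal u hu hu0)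
  have hc : 0 < c := by simpa using hf1 0 h0
  have hfC : f ∈ negDual C := by
    intro w hw
    by_contra! h
    have h1 := hf1 _ (hsc (c / f w) (div_pos hc h) w hw)
    rw [map_smul, smul_eq_mul, div_mul_cancel₀ _ h.ne'] at h1
    exact lt_irrefl _ h1
  have hfu : f u < 0 := by
    rw [map_neg] at hf2
    linarith
  obtain ⟨y, hy, hyp⟩ := mem_intrinsicInterior.1 hp
  let g : ℝ → affineSpan ℝ (negDual C) := fun t =>
    ⟨AffineMap.lineMap p f t, AffineMap.lineMap_mem t
      (subset_affineSpan ℝ _ hpC) (subset_affineSpan ℝ _ hfC)⟩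
  have hg : Continuous g := by
    apply Continuous.subtype_mk
    exact AffineMap.lineMap_continuous
  have hg0 : g 0 = y := by
    apply Subtype.ext
    simp [g, hyp]
  have hev : ∀ᶠ t in nhds (0 : ℝ), g t ∈ ((↑) ⁻¹' (negDual C) : Set (affineSpan ℝ (negDual C))) := by
    apply hg.continuousAt
    rw [hg0]
    exact mem_interior_iff_mem_nhds.1 hy
  obtain ⟨ε, hε, hb⟩ := Metric.eventually_nhds_iff.1 hev
  have h2 := hb (y := -(ε / 2)) (by
    rw [Real.dist_eq, sub_zero, abs_neg, abs_of_pos (by positivity)]; linarith)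
  have h3 : (AffineMap.lineMap p f (-(ε / 2)) : V →L[ℝ] ℝ) u ≤ 0 := h2 u hu
  rw [AffineMap.lineMap_apply_module'] at h3
  simp [hpu] at h3
  nlinarith

lemma aux_coercive [FiniteDimensional ℝ V] (C : Set V) (hC : IsClosedConvexCone C)
    (p : V →L[ℝ] ℝ) (hneg : ∀ u ∈ C, u ≠ 0 → p u < 0) :
    ∃ m : ℝ, 0 < m ∧ ∀ u ∈ C, m * ‖u‖ ≤ - p u := by
  have hK : IsCompact (C ∩ Metric.sphere (0 : V) 1) :=
    (isCompact_sphere (0 : V) 1).inter_left hC.2.1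
  have key : ∀ u ∈ C, u ≠ 0 → ‖u‖⁻¹ • u ∈ C ∩ Metric.sphere (0 : V) 1 := by
    intro u hu hu0
    refine ⟨hC.2.2.2 _ (inv_pos.2 (norm_pos_iff.2 hu0)) _ hu, ?_⟩
    simp [norm_smul, hu0]
  rcases (C ∩ Metric.sphere (0 : V) 1).eq_empty_or_nonempty with he | hne
  · refine ⟨1, one_pos, fun u hu => ?_⟩
    by_cases hu0 : u = 0
    · simp [hu0]
    · have := key u hu hu0
      simp [he] at this
  · obtain ⟨x, hx, hmax⟩ := hK.exists_isMaxOn hne p.continuous.continuousOn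
    have hx0 : x ≠ 0 := by
      rintro rfl
      simp at hx
    refine ⟨- p x, neg_pos.2 (hneg x hx.1 hx0), fun u hu => ?_⟩
    by_cases hu0 : u = 0
    · simp [hu0]
    · have h1 : p (‖u‖⁻¹ • u) ≤ p x := hmax (key u hu hu0)
      rw [map_smul, smul_eq_mul, inv_mul_le_iff₀ (norm_pos_iff.2 hu0)] at h1
      linarith

/-- Let `C` be a salient closed convex cone, `a` a continuous antinorm whose
dual function is an antinorm associated with `C^∨`, and `p ∈ ri(C^∨)`. Then
`u ↦ ⟨p, u⟩ + a(u)` attains a maximum on `C \ {0}` iff `a^∨(p) = 1`; in that case the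
maximal value is `0` and the set of maximizers is `p^∨ \ {0} ⊆ ri C`. -/
theorem statement9 {V : Type*} [NormedAddCommGroup V] [NormedSpace ℝ V] [FiniteDimensional ℝ V]
    (C : Set V) (hC : IsClosedConvexCone C) (hsal : IsSalientCone C)
    (a : V → EReal) (ha : IsAntinorm C a) (hcont : ContinuousOn a C)
    (hdual : IsAntinorm (negDual C) (dualFn a))
    (p : V →L[ℝ] ℝ) (hp : p ∈ intrinsicInterior ℝ (negDual C)) :
    ((∃ u ∈ C \ {0}, ∀ w ∈ C \ {0},
        ((p w : ℝ) : EReal) + a w ≤ ((p u : ℝ) : EReal) + a u) ↔ dualFn a p = 1) ∧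
    (dualFn a p = 1 →
      (∀ u ∈ C \ {0}, ((p u : ℝ) : EReal) + a u ≤ 0) ∧
      (∀ u ∈ pDual a p \ {0}, ((p u : ℝ) : EReal) + a u = 0) ∧
      {u ∈ C \ {0} | ∀ w ∈ C \ {0},
        ((p w : ℝ) : EReal) + a w ≤ ((p u : ℝ) : EReal) + a u} = pDual a p \ {0} ∧
      pDual a p \ {0} ⊆ intrinsicInterior ℝ C) := by
  have hneg := aux_neg_s9 C hC hsal p hp
  obtain ⟨m, hm, hmle⟩ := aux_coercive C hC p hneg
  obtain ⟨h0, hcl, hcv, hsc⟩ := hC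
  obtain ⟨htop, hpos, hzero, hbot, hhom, -⟩ := ha
  -- real-valued version
  have hnn : ∀ u ∈ C, 0 ≤ a u := by
    intro u hu
    by_cases h : u ∈ intrinsicInterior ℝ C
    · exact (hpos u h).le
    · exact (hzero u ⟨hu, h⟩).ge
  have hex : ∃ b : V → ℝ, ∀ u ∈ C, a u = (b u : EReal) :=
    ⟨fun u => (a u).toReal, fun u hu =>
      (EReal.coe_toReal (htop u) (fun h => by have := hnn u hu; simp [h] at this)).symm⟩
  obtain ⟨b, hb⟩ := hex
  have hbnn : ∀ u ∈ C, 0 ≤ b u := fun u hu => by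
    have := hnn u hu
    rw [hb u hu] at this
    exact_mod_cast this
  have hbh : ∀ c : ℝ, 0 < c → ∀ u ∈ C, b (c • u) = c * b u := by
    intro c hc u hu
    have := hhom c hc u
    rw [hb u hu, hb _ (hsc c hc u hu)] at this
    exact_mod_cast this
  have hb0 : b 0 = 0 := by
    have := hbh 2 two_pos 0 h0
    rw [smul_zero] at this
    linarith
  have hri : ∀ u ∈ C, 0 < b u → u ∈ intrinsicInterior ℝ C := by
    intro u hu hbu
    by_contra h
    have := hzero u ⟨hu, h⟩
    rw [hb u hu] at this
    have : b u = 0 := by exact_mod_cast this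
    linarith
  have hS : ∀ (r : ℝ) (v : V), v ∈ antisphere a r ↔ v ∈ C ∧ b v = r := by
    intro r v
    constructor
    · intro h
      have h' : a v = (r : EReal) := h
      have hv : v ∈ C := by
        by_contra hv
        rw [hbot v hv] at h'
        exact EReal.bot_ne_coe r h'
      refine ⟨hv, ?_⟩
      rw [hb v hv] at h'
      exact_mod_cast h'
    · rintro ⟨hv, rfl⟩
      exact hb v hv
  -- the antisphere is nonempty and closed
  have hSne : ∃ v, v ∈ antisphere a 1 := by
    obtain ⟨v, hv⟩ := Set.Nonempty.intrinsicInterior hcv ⟨0, h0⟩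
    have hvC : v ∈ C := intrinsicInterior_subset hv
    have hbv : 0 < b v := by
      have := hpos v hv
      rw [hb v hvC] at this
      exact_mod_cast this
    refine ⟨(b v)⁻¹ • v, (hS _ _).2 ⟨hsc _ (inv_pos.2 hbv) _ hvC, ?_⟩⟩
    rw [hbh _ (inv_pos.2 hbv) _ hvC, inv_mul_cancel₀ hbv.ne']
  obtain ⟨v1, hv1⟩ := hSne
  have hScl : IsClosed (antisphere a 1) := by
    have : antisphere a 1 = C ∩ a ⁻¹' {((1 : ℝ) : EReal)} := by
      ext v
      constructor
      · intro h
        exact ⟨((hS _ _).1 h).1, h⟩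
      · intro h
        exact h.2
    rw [this]
    exact hcont.preimage_isClosed_of_isClosed hcl isClosed_singleton
  have hmaxex : ∃ v0 ∈ antisphere a 1, ∀ w ∈ antisphere a 1, p w ≤ p v0 := by
    have hcomp : IsCompact (antisphere a 1 ∩ {v | p v1 ≤ p v}) := by
      apply Metric.isCompact_of_isClosed_isBounded
      · exact hScl.inter (isClosed_le continuous_const p.continuous)
      · refine (Metric.isBounded_closedBall (x := (0 : V)) (r := - p v1 / m)).subset ?_
        rintro v ⟨hv, hv'⟩
        rw [mem_closedBall_zero_iff, le_div_iff₀ hm]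
        have := hmle v ((hS _ _).1 hv).1
        have h2 : p v1 ≤ p v := hv'
        linarith
    obtain ⟨v0, hv0, hmax⟩ := hcomp.exists_isMaxOn ⟨v1, hv1, le_refl (p v1)⟩
      p.continuous.continuousOn
    refine ⟨v0, hv0.1, fun w hw => ?_⟩
    rcases le_total (p v1) (p w) with h | h
    · exact hmax ⟨hw, h⟩
    · exact h.trans hv0.2
  obtain ⟨v0, hv0, hmax⟩ := hmaxex
  obtain ⟨hv0C, hbv0⟩ := (hS _ _).1 hv0
  have hv00 : v0 ≠ 0 := by
    rintro rfl
    linarith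
  have hdv : dualFn a p = ((- p v0 : ℝ) : EReal) := by
    have : IsGreatest ((fun v => ((p v : ℝ) : EReal)) '' antisphere a 1) ((p v0 : ℝ) : EReal) := by
      refine ⟨⟨v0, hv0, rfl⟩, ?_⟩
      rintro _ ⟨w, hw, rfl⟩
      exact EReal.coe_le_coe_iff.2 (hmax w hw)
    rw [dualFn, this.isLUB.sSup_eq, EReal.coe_neg]
  have hd1 : dualFn a p = 1 ↔ p v0 = -1 := by
    rw [hdv]
    constructor
    · intro h
      have : - p v0 = 1 := by exact_mod_cast h
      linarith
    · intro h
      rw [h]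
      norm_num
  have hle : p v0 = -1 → ∀ u ∈ C, p u + b u ≤ 0 := by
    intro h u hu
    rcases (hbnn u hu).eq_or_lt with h1 | h1
    · rw [← h1, add_zero]
      by_cases hu0 : u = 0
      · simp [hu0]
      · exact (hneg u hu hu0).le
    · have h2 := hmax ((b u)⁻¹ • u) ((hS _ _).2 ⟨hsc _ (inv_pos.2 h1) _ hu, by
        rw [hbh _ (inv_pos.2 h1) _ hu, inv_mul_cancel₀ h1.ne']⟩)
      rw [map_smul, smul_eq_mul, inv_mul_le_iff₀ h1, h] at h2
      linarith
  have hcoe : ∀ u ∈ C, ((p u : ℝ) : EReal) + a u = ((p u + b u : ℝ) : EReal) := by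
    intro u hu
    rw [hb u hu, EReal.coe_add]
  -- maximizers have value zero
  have hval : ∀ u ∈ C \ {0}, (∀ w ∈ C \ {0},
      ((p w : ℝ) : EReal) + a w ≤ ((p u : ℝ) : EReal) + a u) →
      p u + b u = 0 ∧ ∀ w ∈ C, w ≠ 0 → p w + b w ≤ 0 := by
    intro u hu h
    have h' : ∀ w ∈ C, w ≠ 0 → p w + b w ≤ p u + b u := by
      intro w hw hw0
      have := h w ⟨hw, hw0⟩
      rw [hcoe w hw, hcoe u hu.1] at this
      exact_mod_cast this
    have hu0 : u ≠ 0 := hu.2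
    have e : p u + b u = 0 := by
      have h2 := h' ((2 : ℝ) • u) (hsc _ two_pos _ hu.1) (smul_ne_zero two_ne_zero hu0)
      have h3 := h' ((1 / 2 : ℝ) • u) (hsc _ (by norm_num) _ hu.1)
        (smul_ne_zero (by norm_num) hu0)
      rw [hbh _ (by norm_num) _ hu.1, map_smul, smul_eq_mul] at h2 h3
      linarith
    rw [e] at h'
    exact ⟨e, h'⟩
  have hpD : p v0 = -1 → ∀ u, u ∈ pDual a p \ {0} ↔ u ∈ C ∧ u ≠ 0 ∧ p u + b u = 0 := by
    intro h u
    constructor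
    · rintro ⟨hu, hu0⟩
      have hu0' : u ≠ 0 := hu0
      simp only [pDual, mem_iUnion] at hu
      obtain ⟨r, hr, hur, hum⟩ := hu
      have hr0 : 0 ≤ r := hr
      obtain ⟨huC, hbu⟩ := (hS _ _).1 hur
      refine ⟨huC, hu0', ?_⟩
      rcases hr0.eq_or_lt with h1 | h1
      · have h2 := hum 0 ((hS _ _).2 ⟨h0, by rw [hb0, h1]⟩)
        rw [map_zero] at h2
        have := hneg u huC hu0'
        linarith
      · have h2 := hum (r • v0) ((hS _ _).2 ⟨hsc r h1 _ hv0C, by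
          rw [hbh r h1 _ hv0C, hbv0, mul_one]⟩)
        rw [map_smul, smul_eq_mul, h] at h2
        have := hle h u huC
        linarith
    · rintro ⟨huC, hu0, hu⟩
      refine ⟨?_, hu0⟩
      simp only [pDual, mem_iUnion]
      refine ⟨b u, hbnn u huC, (hS _ _).2 ⟨huC, rfl⟩, fun w hw => ?_⟩
      obtain ⟨hwC, hbw⟩ := (hS _ _).1 hw
      have := hle h w hwC
      linarith
  rw [hd1]
  refine ⟨⟨?_, ?_⟩, fun h => ⟨?_, ?_, ?_, ?_⟩⟩
  · rintro ⟨u, hu, hum⟩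
    obtain ⟨e, hw⟩ := hval u hu hum
    have hu0 : u ≠ 0 := hu.2
    have hbu : 0 < b u := by
      have := hneg u hu.1 hu0
      linarith
    have h1 := hw v0 hv0C hv00
    have h2 := hmax ((b u)⁻¹ • u) ((hS _ _).2 ⟨hsc _ (inv_pos.2 hbu) _ hu.1, by
        rw [hbh _ (inv_pos.2 hbu) _ hu.1, inv_mul_cancel₀ hbu.ne']⟩)
    rw [map_smul, smul_eq_mul, show p u = - b u by linarith, mul_neg,
      inv_mul_cancel₀ hbu.ne'] at h2
    linarith
  · intro h
    refine ⟨v0, ⟨hv0C, hv00⟩, fun w hw => ?_⟩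
    rw [hcoe w hw.1, hcoe v0 hv0C, EReal.coe_le_coe_iff]
    have := hle h w hw.1
    linarith
  · intro u hu
    rw [hcoe u hu.1]
    exact_mod_cast hle h u hu.1
  · intro u hu
    obtain ⟨huC, -, e⟩ := (hpD h u).1 hu
    rw [hcoe u huC, e, EReal.coe_zero]
  · ext u
    rw [hpD h u]
    constructor
    · rintro ⟨hu, hum⟩
      refine ⟨hu.1, hu.2, (hval u hu hum).1⟩
    · rintro ⟨huC, hu0, e⟩
      refine ⟨⟨huC, hu0⟩, fun w hw => ?_⟩
      rw [hcoe w hw.1, hcoe u huC, EReal.coe_le_coe_iff, e]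
      exact hle h w hw.1
  · intro u hu
    obtain ⟨huC, hu0, e⟩ := (hpD h u).1 hu
    refine hri u huC ?_
    have := hneg u huC hu0
    linarith
end
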